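/- Let t be an even positive integer and let M be a matroid with an even t-cyclic ordering e_1, e_2, …, e_n. Then for every index i ∈ {1,…,n} and every j with 1 ≤ j ≤ n/2, the set X = {e_{i+1}, e_{i+2}, …, e_{i+j}} satisfies (with parity of indices taken modulo n, which is even): λ(X) = j if j ≤ t−1; λ(X) = t−2 if j > t−1, j is even and i is even; λ(X) = t−1 if j > t−1 and j is odd; and λ(X) = t if j > t−1, j is even and i is odd. -/

import Mathlib

open Set

namespace CyclicArr

variable {α : Type*}

/-- `C` is a circuit of the matroid `M`: a minimal dependent set. -/
def Cct (M : Matroid α) (C : Set α) : Prop := Minimal M.Dep C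

/-- The set of `len` consecutive elements `{e_i, e_{i+1}, …, e_{i+len-1}}`
in a cyclic ordering `e`, subscripts mod `n`. -/
def seg {n : ℕ} (e : ZMod n → α) (i : ℤ) (len : ℕ) : Set α :=
  (fun k : ℕ => e ((i + k : ℤ) : ZMod n)) '' Set.Iio len

/-- `e` is a cyclic ordering of (the ground set of) `M`. -/
def CyclicOrd {n : ℕ} (M : Matroid α) (e : ZMod n → α) : Prop :=
  Function.Injective e ∧ Set.range e = M.E

/-- `e` is a cyclic `(t-1, t)`-ordering of `M`: every `t-1` consecutive elements
are contained in a `t`-element circuit and a `t`-element cocircuit. -/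
def CyclicPropOrd {n : ℕ} (M : Matroid α) (t : ℕ) (e : ZMod n → α) : Prop :=
  CyclicOrd M e ∧
  ∀ i : ℤ, (∃ C, Cct M C ∧ C.ncard = t ∧ seg e i (t-1) ⊆ C) ∧
           (∃ C, Cct M✶ C ∧ C.ncard = t ∧ seg e i (t-1) ⊆ C)

/-- `M` has the cyclic `(t-1, t)`-property: it admits a cyclic `(t-1, t)`-ordering. -/
def HasCycProp (M : Matroid α) (t : ℕ) : Prop :=
  ∃ (n : ℕ) (e : ZMod n → α), CyclicPropOrd M t e

/-- `e` is an odd `t`-cyclic ordering of `M` (with `n ≥ t+1`): for all odd `i ∈ {1,…,n}`,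
`{e_i, …, e_{i+t-1}}` is a `t`-element circuit and `{e_{i+1}, …, e_{i+t}}` is a
`t`-element cocircuit. -/
def OddTCycOrd {n : ℕ} (M : Matroid α) (t : ℕ) (e : ZMod n → α) : Prop :=
  CyclicOrd M e ∧ t + 1 ≤ n ∧
  ∀ i : ℕ, Odd i → 1 ≤ i → i ≤ n →
    (Cct M (seg e (i : ℤ) t) ∧ (seg e (i : ℤ) t).ncard = t) ∧
    (Cct M✶ (seg e ((i : ℤ) + 1) t) ∧ (seg e ((i : ℤ) + 1) t).ncard = t)

/-- `e` is an even `t`-cyclic ordering of `M` (with `n ≥ t+1`): for all odd `i ∈ {1,…,n}`,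
`{e_i, …, e_{i+t-1}}` is both a `t`-element circuit and a `t`-element cocircuit. -/
def EvenTCycOrd {n : ℕ} (M : Matroid α) (t : ℕ) (e : ZMod n → α) : Prop :=
  CyclicOrd M e ∧ t + 1 ≤ n ∧
  ∀ i : ℕ, Odd i → 1 ≤ i → i ≤ n →
    Cct M (seg e (i : ℤ) t) ∧ Cct M✶ (seg e (i : ℤ) t) ∧ (seg e (i : ℤ) t).ncard = t

/-- `M` is `t`-cyclic: it admits an odd or even `t`-cyclic ordering. -/
def TCyclic (M : Matroid α) (t : ℕ) : Prop :=
  ∃ (n : ℕ) (e : ZMod n → α), OddTCycOrd M t e ∨ EvenTCycOrd M t e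

/-- The rank of a set `X` in a matroid `M`: the maximum cardinality of an
independent subset of `X` (for a finite matroid). -/
noncomputable def rkf (M : Matroid α) (X : Set α) : ℕ :=
  sSup {k | ∃ I, M.Indep I ∧ I ⊆ X ∧ I.ncard = k}

/-- The connectivity function `λ(X) = r(X) + r*(X) - |X|`, valued in `ℤ`. -/
noncomputable def lam (M : Matroid α) (X : Set α) : ℤ :=
  (rkf M X : ℤ) + (rkf M✶ X : ℤ) - (X.ncard : ℤ)

/-- The local connectivity `⊓(X, Y) = r(X) + r(Y) - r(X ∪ Y)`, valued in `ℤ`. -/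
noncomputable def pic (M : Matroid α) (X Y : Set α) : ℤ :=
  (rkf M X : ℤ) + (rkf M Y : ℤ) - (rkf M (X ∪ Y) : ℤ)

/-- `X` is exactly `k`-separating: `λ(X) = k - 1`. -/
noncomputable def ExactSep (M : Matroid α) (k : ℕ) (X : Set α) : Prop :=
  lam M X = (k : ℤ) - 1

/-- `(P_1, …, P_m)` is a concatenation of the cyclic ordering `e`, where `P i` is the
block of `l i` consecutive elements starting at position `a i`, and the blocks occur in
cyclic order and partition the ground set. -/
def IsConcat {n m : ℕ} (e : ZMod n → α) (P : ZMod m → Set α) (a l : ZMod m → ℕ) : Prop :=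
  (∀ i, 1 ≤ l i) ∧
  (∀ i, ((a (i + 1) : ZMod n)) = ((a i + l i : ℕ) : ZMod n)) ∧
  (∀ i, P i = seg e (a i : ℤ) (l i)) ∧
  Set.univ.PairwiseDisjoint P ∧
  (⋃ i, P i) = Set.range e

/-- `(P_1, …, P_m)` is a `k`-flower of `M`: a partition of the ground set into nonempty
sets, each exactly `k`-separating, with consecutive unions exactly `k`-separating. -/
noncomputable def IsFlower (M : Matroid α) (k : ℕ) {m : ℕ} (P : ZMod m → Set α) : Prop :=
  2 ≤ m ∧
  Set.univ.PairwiseDisjoint P ∧ (⋃ i, P i) = M.E ∧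
  (∀ i, (P i).Nonempty) ∧
  (∀ i, ExactSep M k (P i)) ∧
  (3 ≤ m → ∀ i, ExactSep M k (P i ∪ P (i + 1)))

/-- `I ⊆ ZMod m` is a set of consecutive members in the cyclic order. -/
def CycInterval {m : ℕ} (I : Set (ZMod m)) : Prop :=
  ∃ (a : ZMod m) (len : ℕ), 0 < len ∧ I = (fun k : ℕ => a + (k : ZMod m)) '' Set.Iio len

/-- A `k`-daisy: a `k`-flower in which the union of a proper nonempty collection of
petals is exactly `k`-separating precisely when the petals are consecutive. -/
noncomputable def IsDaisy (M : Matroid α) (k : ℕ) {m : ℕ} (P : ZMod m → Set α) : Prop :=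
  IsFlower M k P ∧
  ∀ I : Set (ZMod m), I.Nonempty → I ≠ Set.univ →
    (ExactSep M k (⋃ i ∈ I, P i) ↔ CycInterval I)

/-- A `k`-anemone: a `k`-flower in which the union of every proper nonempty collection
of petals is exactly `k`-separating. -/
noncomputable def IsAnemone (M : Matroid α) (k : ℕ) {m : ℕ} (P : ZMod m → Set α) : Prop :=
  IsFlower M k P ∧
  ∀ I : Set (ZMod m), I.Nonempty → I ≠ Set.univ → ExactSep M k (⋃ i ∈ I, P i)

/-!
Let `W` be a set that is both a circuit and a cocircuit, and let `x ∈ W`. If `W` is disjoint from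
`X`, then adding `x` to `X` raises both `r` and `r*`, hence raises `λ` by one. If `W ⊆ X ∪ {x}` and
`x ∉ X`, then adding `x` changes neither rank, hence lowers `λ` by one.

Orthogonality of circuits and cocircuits forces `n` to be even, so windows of length `t` are
circuits and cocircuits at every odd integer position. A segment shorter than `t` is therefore
independent and coindependent, with `λ` equal to its length. A segment of length at least `t - 2`
starting at an odd position and ending at an even one keeps `λ = t - 2` under extension by two
elements, one step up and one step down. Every other long segment is such a segment with one more
element at one end or at both ends, and each of these elements raises `λ` by one.
-/

section Rank

variable {M : Matroid α} {X C K : Set α} {x : α}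

lemma coe_rkf_of_isRkFinite (hX : M.IsRkFinite X) : (rkf M X : ℕ∞) = M.eRk X := by
  obtain ⟨I, hI, hIfin⟩ := hX.exists_finite_isBasis'
  have hgreatest : IsGreatest {k | ∃ J, M.Indep J ∧ J ⊆ X ∧ J.ncard = k} I.ncard := by
    refine ⟨⟨I, hI.indep, hI.subset, rfl⟩, ?_⟩
    rintro _ ⟨J, hJ, hJX, rfl⟩
    have hle : J.encard ≤ I.encard := hI.eRk_eq_encard ▸ hJ.encard_le_eRk_of_subset hJX
    exact ENat.toNat_le_toNat hle hIfin.encard_lt_top.ne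
  rw [rkf, hgreatest.csSup_eq, hIfin.cast_ncard_eq, hI.eRk_eq_encard]

lemma rkf_eq_ncard_of_indep (hXfin : X.Finite) (hX : M.Indep X) : rkf M X = X.ncard := by
  have h := coe_rkf_of_isRkFinite (M.isRkFinite_of_finite hXfin)
  rw [hX.eRk_eq_encard, ← hXfin.cast_ncard_eq] at h
  exact_mod_cast h

lemma rkf_insert_of_mem_closure (hX : M.IsRkFinite X) (hx : x ∈ M.closure X) :
    rkf M (insert x X) = rkf M X := by
  have h : M.eRk (insert x X) = M.eRk X := by
    rw [← M.eRk_closure_eq, Matroid.closure_insert_eq_of_mem_closure hx, M.eRk_closure_eq]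
  rw [← coe_rkf_of_isRkFinite hX, ← coe_rkf_of_isRkFinite (hX.insert x)] at h
  exact_mod_cast h

lemma rkf_insert_of_notMem_closure (hX : M.IsRkFinite X) (hxE : x ∈ M.E)
    (hx : x ∉ M.closure X) : rkf M (insert x X) = rkf M X + 1 := by
  have h := Matroid.eRk_insert_eq_add_one ⟨hxE, hx⟩
  rw [← coe_rkf_of_isRkFinite hX, ← coe_rkf_of_isRkFinite (hX.insert x)] at h
  exact_mod_cast h

lemma mem_closure_of_isCircuit (hC : M.IsCircuit C) (hxC : x ∈ C) (hCX : C ⊆ insert x X) :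
    x ∈ M.closure X :=
  M.closure_subset_closure (sdiff_singleton_subset_iff.2 hCX)
    (hC.mem_closure_sdiff_singleton_of_mem hxC)

lemma notMem_closure_of_isCocircuit (hK : M.IsCocircuit K) (hxK : x ∈ K) (hKX : Disjoint K X) :
    x ∉ M.closure X := by
  intro hx
  obtain ⟨C, hCX, hC, hxC⟩ :=
    Matroid.exists_isCircuit_of_mem_closure hx (hKX.notMem_of_mem_left hxK)
  have hinter : C ∩ K = {x} := by
    refine Subset.antisymm (fun y ⟨hyC, hyK⟩ => ?_) (singleton_subset_iff.2 ⟨hxC, hxK⟩)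
    exact (hCX hyC).resolve_right (hKX.notMem_of_mem_left hyK)
  exact hC.inter_isCocircuit_ne_singleton hK hinter

lemma encard_add_encard_le_of_isCircuit_of_isCocircuit (hC : M.IsCircuit C)
    (hK : M.IsCocircuit K) : C.encard + K.encard ≤ M.E.encard + 2 :=
  calc C.encard + K.encard
      = (M.eRk C + 1) + (M✶.eRk K + 1) := by rw [hC.eRk_add_one_eq, hK.isCircuit.eRk_add_one_eq]
    _ = (M.eRk C + M✶.eRk K) + 2 := by ring
    _ ≤ (M.eRank + M✶.eRank) + 2 := by gcongr <;> exact Matroid.eRk_le_eRank _ _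
    _ = M.E.encard + 2 := by rw [M.eRank_add_eRank_dual]

end Rank

section Connectivity

variable {M : Matroid α} {X C K : Set α} {x : α}

lemma lam_eq_ncard_of_indep_of_coindep (hXfin : X.Finite) (hX : M.Indep X) (hX' : M✶.Indep X) :
    lam M X = X.ncard := by
  rw [lam, rkf_eq_ncard_of_indep hXfin hX, rkf_eq_ncard_of_indep hXfin hX']
  ring

lemma lam_insert_of_disjoint (hX : X.Finite) (hC : M.IsCircuit C) (hK : M.IsCocircuit K)
    (hxC : x ∈ C) (hxK : x ∈ K) (hCX : Disjoint C X) (hKX : Disjoint K X) :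
    lam M (insert x X) = lam M X + 1 := by
  have hr : rkf M (insert x X) = rkf M X + 1 :=
    rkf_insert_of_notMem_closure (M.isRkFinite_of_finite hX) (hK.subset_ground hxK)
      (notMem_closure_of_isCocircuit hK hxK hKX)
  have hr' : rkf M✶ (insert x X) = rkf M✶ X + 1 :=
    rkf_insert_of_notMem_closure (M✶.isRkFinite_of_finite hX) (hC.subset_ground hxC)
      (notMem_closure_of_isCocircuit hC.isCocircuit hxC hCX)
  rw [lam, lam, hr, hr', ncard_insert_of_notMem (hCX.notMem_of_mem_left hxC) hX]
  push_cast
  ring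

lemma lam_insert_of_subset_insert (hX : X.Finite) (hxX : x ∉ X) (hC : M.IsCircuit C)
    (hK : M.IsCocircuit K) (hxC : x ∈ C) (hxK : x ∈ K) (hCX : C ⊆ insert x X)
    (hKX : K ⊆ insert x X) : lam M (insert x X) = lam M X - 1 := by
  have hr : rkf M (insert x X) = rkf M X :=
    rkf_insert_of_mem_closure (M.isRkFinite_of_finite hX) (mem_closure_of_isCircuit hC hxC hCX)
  have hr' : rkf M✶ (insert x X) = rkf M✶ X :=
    rkf_insert_of_mem_closure (M✶.isRkFinite_of_finite hX)
      (mem_closure_of_isCircuit hK.isCircuit hxK hKX)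
  rw [lam, lam, hr, hr', ncard_insert_of_notMem hxX hX]
  push_cast
  ring

end Connectivity

section Segment

variable {n : ℕ} {e : ZMod n → α} {a b : ℤ} {l m : ℕ}

lemma seg_eq_image_Ico (e : ZMod n → α) (a : ℤ) (l : ℕ) :
    seg e a l = (fun x : ℤ => e x) '' Ico a (a + l) := by
  ext y
  constructor
  · rintro ⟨k, hk, rfl⟩
    exact ⟨a + k, by grind, rfl⟩
  · rintro ⟨x, hx, rfl⟩
    have hcast : a + ((x - a).toNat : ℤ) = x := by grind
    exact ⟨(x - a).toNat, by grind, by simp only [hcast]⟩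

lemma finite_seg (e : ZMod n → α) (a : ℤ) (l : ℕ) : (seg e a l).Finite :=
  (finite_Iio l).image _

lemma seg_congr (e : ZMod n → α) (h : (a : ZMod n) = b) (l : ℕ) : seg e a l = seg e b l := by
  simp only [seg, Int.cast_add, h]

lemma mem_seg {x : ℤ} (hax : a ≤ x) (hxl : x < a + l) : e x ∈ seg e a l := by
  rw [seg_eq_image_Ico]
  exact mem_image_of_mem (fun x : ℤ => e x) ⟨hax, hxl⟩

lemma seg_subset_seg (hab : b ≤ a) (h : a + l ≤ b + m) : seg e a l ⊆ seg e b m := by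
  simp only [seg_eq_image_Ico]
  exact image_mono (Ico_subset_Ico hab h)

lemma seg_succ (e : ZMod n → α) (a : ℤ) (l : ℕ) :
    seg e a (l + 1) = insert (e (a + l : ℤ)) (seg e a l) := by
  simp only [seg_eq_image_Ico, ← image_insert_eq (f := fun x : ℤ => e x)]
  congr 1
  grind

lemma seg_succ' (e : ZMod n → α) (a : ℤ) (l : ℕ) :
    seg e a (l + 1) = insert (e a) (seg e (a + 1) l) := by
  simp only [seg_eq_image_Ico, ← image_insert_eq (f := fun x : ℤ => e x)]
  congr 1
  grind

lemma injOn_intCast_Ico (he : Function.Injective e) (a : ℤ) :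
    InjOn (fun x : ℤ => e x) (Ico a (a + n)) := by
  intro x hx y hy hxy
  have hdvd : (n : ℤ) ∣ y - x := (ZMod.intCast_eq_intCast_iff_dvd_sub x y n).1 (he hxy)
  have hzero : y - x = 0 := Int.eq_zero_of_abs_lt_dvd hdvd (by grind)
  grind

lemma ncard_seg (he : Function.Injective e) (a : ℤ) (hl : l ≤ n) : (seg e a l).ncard = l := by
  have hsub : Ico a (a + l) ⊆ Ico a (a + n) := Ico_subset_Ico_right (by grind)
  rw [seg_eq_image_Ico, ((injOn_intCast_Ico he a).mono hsub).ncard_image]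
  simp [ncard_eq_toFinset_card']

lemma exists_odd_seg_ssubset_seg (he : Function.Injective e) (hlm : l < m) (hmn : m ≤ n) (a : ℤ) :
    ∃ s : ℤ, Odd s ∧ seg e a l ⊂ seg e s m := by
  obtain ⟨s, hs, hsa, hle⟩ : ∃ s : ℤ, Odd s ∧ s ≤ a ∧ a + l ≤ s + m := by
    rcases Int.even_or_odd a with ha | ha
    · exact ⟨a - 1, ha.sub_odd odd_one, by lia, by lia⟩
    · exact ⟨a, ha, le_rfl, by lia⟩
  refine ⟨s, hs, (seg_subset_seg hsa hle).ssubset_of_ne fun heq => hlm.ne ?_⟩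
  rw [← ncard_seg he a (hlm.le.trans hmn), heq, ncard_seg he s hmn]

lemma seg_inter_seg (he : Function.Injective e) (hab : a ≤ b) (hln : l ≤ n)
    (hmn : b + m ≤ a + n) :
    seg e a l ∩ seg e b m = (fun x : ℤ => e x) '' (Ico a (a + l) ∩ Ico b (b + m)) := by
  rw [seg_eq_image_Ico, seg_eq_image_Ico, (injOn_intCast_Ico he a).image_inter]
  · exact Ico_subset_Ico_right (by grind)
  · exact Ico_subset_Ico hab hmn

lemma disjoint_seg_seg (he : Function.Injective e) (hab : a + l ≤ b) (hmn : b + m ≤ a + n) :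
    Disjoint (seg e a l) (seg e b m) := by
  have hempty : Ico a (a + l) ∩ Ico b (b + m) = ∅ := by grind
  rw [disjoint_iff_inter_eq_empty, seg_inter_seg he (by grind) (by grind) hmn, hempty, image_empty]

lemma seg_inter_seg_eq_singleton (he : Function.Injective e) (hab : a ≤ b) (hlb : a + l = b + 1)
    (hm : 0 < m) (hmn : b + m ≤ a + n) : seg e a l ∩ seg e b m = {e b} := by
  have hsingle : Ico a (a + l) ∩ Ico b (b + m) = {b} := by grind
  rw [seg_inter_seg he hab (by grind) hmn, hsingle, image_singleton]

lemma exists_odd_natCast_eq_intCast (hn : Even n) (hn0 : 0 < n) {s : ℤ} (hs : Odd s) :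
    ∃ i : ℕ, Odd i ∧ i < n ∧ ((i : ℤ) : ZMod n) = s := by
  have hnonneg : 0 ≤ s % n := Int.emod_nonneg _ (by lia)
  have hlt : s % n < n := Int.emod_lt_of_pos _ (by lia)
  have hodd : s % n % 2 = 1 := by
    rw [Int.emod_emod_of_dvd _ (by exact_mod_cast hn.two_dvd), Int.odd_iff.1 hs]
  refine ⟨(s % n).toNat, Nat.odd_iff.2 (by lia), by lia, ?_⟩
  rw [Int.toNat_of_nonneg hnonneg, ZMod.intCast_mod]

end Segment

namespace EvenTCycOrd

variable {M : Matroid α} {t n : ℕ} {e : ZMod n → α} {a s : ℤ} {l : ℕ}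

lemma encard_ground (he : EvenTCycOrd M t e) : M.E.encard = n := by
  obtain ⟨⟨hinj, hrange⟩, htn, -⟩ := he
  have : NeZero n := ⟨by lia⟩
  rw [← hrange, ← image_univ, hinj.encard_image, encard_univ, ENat.card_eq_coe_fintype_card,
    ZMod.card]

lemma pos (he : EvenTCycOrd M t e) : 0 < t := by
  obtain ⟨-, htn, hwindow⟩ := he
  obtain ⟨hcirc, -, hcard⟩ := hwindow 1 odd_one le_rfl (by lia)
  exact hcard ▸ (Matroid.IsCircuit.nonempty hcirc).ncard_pos (finite_seg e _ t)

/- If `n` were odd, the window starting at `n + 2 - t` would also be a cocircuit, and it would meet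
the circuit starting at `1` only in `e 1`. -/
lemma even_length (he : EvenTCycOrd M t e) (ht : Even t) : Even n := by
  have hpos := he.pos
  have hground := he.encard_ground
  obtain ⟨⟨hinj, -⟩, htn, hwindow⟩ := he
  have hfirst := hwindow 1 odd_one le_rfl (by lia)
  have hC : M.IsCircuit (seg e 1 t) := hfirst.1
  have htwo : t + t ≤ n + 2 := by
    have h := encard_add_encard_le_of_isCircuit_of_isCocircuit hC hfirst.2.1
    rw [← (finite_seg e _ t).cast_ncard_eq, ← (finite_seg e _ t).cast_ncard_eq, hground,
      ncard_seg hinj _ (by lia), ncard_seg hinj _ (by lia)] at h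
    exact_mod_cast h
  by_contra hn
  have hK : M.IsCocircuit (seg e ((n + 2 - t : ℕ) : ℤ) t) :=
    (hwindow (n + 2 - t) (by grind) (by grind) (by grind)).2.1
  have hwrap : seg e 1 t = seg e (n + 1) t := seg_congr e (by simp) t
  have hinter := seg_inter_seg_eq_singleton hinj (a := (n + 2 - t : ℕ)) (b := n + 1) (l := t)
    (m := t) (by grind) (by grind) hpos (by grind)
  rw [inter_comm, ← hwrap] at hinter
  exact hC.inter_isCocircuit_ne_singleton hK hinter

lemma exists_odd_natCast_seg_eq (he : EvenTCycOrd M t e) (ht : Even t) (hs : Odd s) :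
    ∃ i : ℕ, Odd i ∧ 1 ≤ i ∧ i ≤ n ∧ seg e i t = seg e s t := by
  obtain ⟨i, hi, hin, his⟩ :=
    exists_odd_natCast_eq_intCast (he.even_length ht) (by have := he.2.1; lia) hs
  exact ⟨i, hi, hi.pos, hin.le, seg_congr e his t⟩

lemma isCircuit_seg (he : EvenTCycOrd M t e) (ht : Even t) (hs : Odd s) :
    M.IsCircuit (seg e s t) := by
  obtain ⟨i, hi, hi1, hin, hseg⟩ := he.exists_odd_natCast_seg_eq ht hs
  exact hseg ▸ (he.2.2 i hi hi1 hin).1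

lemma isCocircuit_seg (he : EvenTCycOrd M t e) (ht : Even t) (hs : Odd s) :
    M.IsCocircuit (seg e s t) := by
  obtain ⟨i, hi, hi1, hin, hseg⟩ := he.exists_odd_natCast_seg_eq ht hs
  exact hseg ▸ (he.2.2 i hi hi1 hin).2.1

lemma lam_seg_of_lt (he : EvenTCycOrd M t e) (ht : Even t) (hl : l < t) (a : ℤ) :
    lam M (seg e a l) = l := by
  have htn : t ≤ n := Nat.le_of_succ_le he.2.1
  obtain ⟨s, hs, hss⟩ := exists_odd_seg_ssubset_seg he.1.1 hl htn a
  have hindep : M.Indep (seg e a l) := (he.isCircuit_seg ht hs).ssubset_indep hss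
  have hcoindep : M✶.Indep (seg e a l) := (he.isCocircuit_seg ht hs).isCircuit.ssubset_indep hss
  rw [lam_eq_ncard_of_indep_of_coindep (finite_seg e a l) hindep hcoindep,
    ncard_seg he.1.1 a (hl.le.trans htn)]

lemma lam_seg_succ_of_odd (he : EvenTCycOrd M t e) (ht : Even t) (hal : Odd (a + l))
    (hln : l + t ≤ n) : lam M (seg e a (l + 1)) = lam M (seg e a l) + 1 := by
  have hpos := he.pos
  have hmem : e (a + l : ℤ) ∈ seg e (a + l) t := mem_seg le_rfl (by lia)
  have hdisj : Disjoint (seg e (a + l) t) (seg e a l) :=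
    (disjoint_seg_seg he.1.1 le_rfl (by lia)).symm
  rw [seg_succ]
  exact lam_insert_of_disjoint (finite_seg e a l) (he.isCircuit_seg ht hal)
    (he.isCocircuit_seg ht hal) hmem hmem hdisj hdisj

lemma lam_seg_succ_of_even_start (he : EvenTCycOrd M t e) (ht : Even t) (ha : Even a)
    (hln : l + t ≤ n) : lam M (seg e a (l + 1)) = lam M (seg e (a + 1) l) + 1 := by
  have hpos := he.pos
  have hodd : Odd (a + 1 - t) := by grind
  have hmem : e a ∈ seg e (a + 1 - t) t := mem_seg (by lia) (by lia)
  have hdisj : Disjoint (seg e (a + 1 - t) t) (seg e (a + 1) l) :=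
    disjoint_seg_seg he.1.1 (by lia) (by lia)
  rw [seg_succ']
  exact lam_insert_of_disjoint (finite_seg e (a + 1) l) (he.isCircuit_seg ht hodd)
    (he.isCocircuit_seg ht hodd) hmem hmem hdisj hdisj

lemma lam_seg_succ_of_even (he : EvenTCycOrd M t e) (ht : Even t) (hal : Even (a + l))
    (htl : t ≤ l + 1) (hln : l < n) : lam M (seg e a (l + 1)) = lam M (seg e a l) - 1 := by
  have hpos := he.pos
  have hodd : Odd (a + l + 1 - t) := by grind
  have hmem : e (a + l : ℤ) ∈ seg e (a + l + 1 - t) t := mem_seg (by lia) (by lia)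
  have hsub : seg e (a + l + 1 - t) t ⊆ insert (e (a + l : ℤ)) (seg e a l) :=
    seg_succ e a l ▸ seg_subset_seg (by lia) (by lia)
  have hdisj : Disjoint (seg e a l) (seg e (a + l) 1) :=
    disjoint_seg_seg he.1.1 le_rfl (by lia)
  have hnotMem : e (a + l : ℤ) ∉ seg e a l :=
    hdisj.notMem_of_mem_right (mem_seg le_rfl (by lia))
  rw [seg_succ]
  exact lam_insert_of_subset_insert (finite_seg e a l) hnotMem (he.isCircuit_seg ht hodd)
    (he.isCocircuit_seg ht hodd) hmem hmem hsub hsub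

lemma lam_seg_of_odd_start_of_even (he : EvenTCycOrd M t e) (ht : Even t) (ha : Odd a)
    (hl : Even l) (htl : t ≤ l + 2) (hln : l + t ≤ n + 2) : lam M (seg e a l) = (t : ℤ) - 2 := by
  have hpos := he.pos
  obtain ⟨m, hm⟩ : ∃ m, l + 2 = t + 2 * m := ⟨(l + 2 - t) / 2, by grind⟩
  clear hl htl
  induction m generalizing l with
  | zero =>
    rw [he.lam_seg_of_lt ht (by lia)]
    lia
  | succ m ih =>
    obtain ⟨k, rfl⟩ : ∃ k, l = k + 1 + 1 := ⟨l - 2, by grind⟩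
    rw [he.lam_seg_succ_of_even ht (by grind) (by grind) (by grind),
      he.lam_seg_succ_of_odd ht (by grind) (by grind), ih (by grind) (by grind)]
    ring

lemma lam_seg_of_odd (he : EvenTCycOrd M t e) (ht : Even t) (hl : Odd l) (htl : t ≤ l + 1)
    (hln : l + t ≤ n + 1) (a : ℤ) : lam M (seg e a l) = (t : ℤ) - 1 := by
  obtain ⟨k, rfl⟩ : ∃ k, l = k + 1 := ⟨l - 1, by grind⟩
  rcases Int.even_or_odd a with ha | ha
  · rw [he.lam_seg_succ_of_even_start ht ha (by lia),
      he.lam_seg_of_odd_start_of_even ht ha.add_one (by grind) (by lia) (by lia)]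
    ring
  · rw [he.lam_seg_succ_of_odd ht (by grind) (by lia),
      he.lam_seg_of_odd_start_of_even ht ha (by grind) (by lia) (by lia)]
    ring

lemma lam_seg_of_even_start_of_even (he : EvenTCycOrd M t e) (ht : Even t) (ha : Even a)
    (hl : Even l) (htl : t ≤ l) (hln : l + t ≤ n) : lam M (seg e a l) = t := by
  have hpos := he.pos
  obtain ⟨k, rfl⟩ : ∃ k, l = k + 1 := ⟨l - 1, by lia⟩
  rw [he.lam_seg_succ_of_even_start ht ha (by lia),
    he.lam_seg_of_odd ht (by grind) htl (by lia)]
  ring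

end EvenTCycOrd

theorem statement_14_general {M : Matroid α} {t n : ℕ} (ht : Even t) {e : ZMod n → α}
    (he : EvenTCycOrd M t e) (i : ℤ) (j : ℕ) :
    (j < t → lam M (seg e (i + 1) j) = j) ∧
    (t ≤ j → j + t ≤ n → Even j → Even i → lam M (seg e (i + 1) j) = (t : ℤ) - 2) ∧
    (t ≤ j → j + t ≤ n → Odd j → lam M (seg e (i + 1) j) = (t : ℤ) - 1) ∧
    (t ≤ j → j + t ≤ n → Even j → Odd i → lam M (seg e (i + 1) j) = t) := by
  refine ⟨fun hj => ?_, fun htj hjn hj hi => ?_, fun htj hjn hj => ?_, fun htj hjn hj hi => ?_⟩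
  · exact he.lam_seg_of_lt ht hj _
  · exact he.lam_seg_of_odd_start_of_even ht hi.add_one hj (by lia) (by lia)
  · exact he.lam_seg_of_odd ht hj (by lia) (by lia) _
  · exact he.lam_seg_of_even_start_of_even ht hi.add_one hj htj hjn

/-- Let `t` be an even positive integer and `e` an even `t`-cyclic
ordering of `M`. For every `i ∈ {1,…,n}` and `1 ≤ j ≤ n/2`, the set
`X = {e_{i+1},…,e_{i+j}}` satisfies: `λ(X) = j` if `j ≤ t-1`; `λ(X) = t-2` if `j > t-1`,
`j` even, `i` even; `λ(X) = t-1` if `j > t-1`, `j` odd; `λ(X) = t` if `j > t-1`, `j` even,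
`i` odd. -/
theorem statement_14 (M : Matroid α) (t n : ℕ) (ht : 1 ≤ t) (hteven : Even t)
    (e : ZMod n → α) (he : EvenTCycOrd M t e) :
    ∀ i : ℕ, 1 ≤ i → i ≤ n → ∀ j : ℕ, 1 ≤ j → 2 * j ≤ n →
      (j ≤ t - 1 → lam M (seg e ((i : ℤ) + 1) j) = (j : ℤ)) ∧
      (t - 1 < j → Even j → Even i → lam M (seg e ((i : ℤ) + 1) j) = (t : ℤ) - 2) ∧
      (t - 1 < j → Odd j → lam M (seg e ((i : ℤ) + 1) j) = (t : ℤ) - 1) ∧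
      (t - 1 < j → Even j → Odd i → lam M (seg e ((i : ℤ) + 1) j) = (t : ℤ)) := by
  intro i _ _ j _ hjn
  obtain ⟨hsmall, hevenEven, hodd, hevenOdd⟩ := statement_14_general hteven he i j
  exact ⟨fun _ => hsmall (by lia), fun _ hj hi => hevenEven (by lia) (by lia) hj (mod_cast hi),
    fun _ hj => hodd (by lia) (by lia) hj,
    fun _ hj hi => hevenOdd (by lia) (by lia) hj (mod_cast hi)⟩

end CyclicArr
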